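/- Let K be an imaginary quadratic field with fundamental discriminant D whose distinct prime divisors are p1, …, pt (ordered so that p_t = 2 if 2 | D), and let R be the Rédei matrix of K. Let c be a positive odd integer coprime to D such that the Legendre symbol (D/p) = 1 for every prime p dividing c. Then the map d ↦ X_d = (v_{p1}(d), …, v_{pt}(d))^T is a bijection from {d ∈ D(K) : d·c ∈ N(K^×)} onto {X ∈ F_2^t : R·X = C}, where C = ([c/p_1], …, [c/p_{t−1}])^T, with inverse (x1, …, xt)^T ↦ Π p_i^{x_i}. -/

import Mathlib

open NumberField

open Classical in
/-- The additive Legendre symbol `[a/p] ∈ F₂`: `0` if `a` is a square mod `p`, `1` otherwise. -/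
noncomputable def aLeg (a : ℤ) (p : ℕ) : ZMod 2 :=
  if IsSquare ((a : ZMod p)) then 0 else 1

/-- The Rédei matrix of a quadratic field with discriminant `D` and prime divisors
`p₁, …, p_t` of `D`: the `(t−1) × t` matrix over `F₂` with `r_{ii} = [(D/p_i^*)/p_i]` and
`r_{ij} = [p_j/p_i]` for `i ≠ j`, where `p_i^* = (−1)^{(p_i−1)/2}·p_i`. -/
noncomputable def redeiMatrix (D : ℤ) (t : ℕ) (p : Fin t → ℕ) :
    Matrix (Fin (t - 1)) (Fin t) (ZMod 2) :=
  Matrix.of fun i j =>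
    let i' : Fin t := i.castLE (Nat.sub_le t 1)
    if (i' : ℕ) = (j : ℕ) then
      aLeg (D / ((-1) ^ ((p i' - 1) / 2) * (p i' : ℤ))) (p i')
    else aLeg (p j) (p i')

/-!
An element `n` of `ℚ^×` is a norm from `K` exactly when the conic `x² - D y² = n` has a rational
point. Legendre's descent produces such a point from a real one together with `p`-adic ones at the
odd primes alone. For `n = d c` the conic has points over `ℚ_p` at every odd prime `p ∤ D`: either
`d c` is a unit, or `p ∣ c` and `D` is a square. At an odd prime `p ∣ D` the condition is that the
tame Hilbert symbol of `D` and `d c` is trivial, that is, that an explicit unit is a square modulo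
`p`; taking additive Legendre symbols turns this into the row of `R X = C` at `p`. The row missing
from `R` is that of the last prime: if it is odd, then `D` is odd, and the condition there follows
from the others by quadratic reciprocity.
-/

/-- `b` is represented by the norm form `x² - a y²` of `R[√a]`; for nonzero `a`, `b` in a local
field of characteristic not two this says that the Hilbert symbol `(a, b)` is trivial. -/
def IsQuadNorm {R : Type*} [CommRing R] (a b : R) : Prop := ∃ x y : R, x ^ 2 - a * y ^ 2 = b

namespace IsQuadNorm

section CommRing

variable {R : Type*} [CommRing R] {a b c : R}

lemma sq (a b : R) : IsQuadNorm a (b ^ 2) := ⟨b, 0, by ring⟩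

lemma neg_self (a : R) : IsQuadNorm a (-a) := ⟨0, 1, by ring⟩

lemma mul (hb : IsQuadNorm a b) (hc : IsQuadNorm a c) : IsQuadNorm a (b * c) := by
  obtain ⟨x, y, rfl⟩ := hb
  obtain ⟨z, w, rfl⟩ := hc
  exact ⟨x * z + a * y * w, x * w + y * z, by ring⟩

lemma map {S : Type*} [CommRing S] (f : R →+* S) (h : IsQuadNorm a b) :
    IsQuadNorm (f a) (f b) := by
  obtain ⟨x, y, rfl⟩ := h
  exact ⟨f x, f y, by simp only [map_sub, map_mul, map_pow]⟩

end CommRing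

section Field

variable {F : Type*} [Field F] {a b c k : F}

lemma mul_sq_iff (hk : k ≠ 0) : IsQuadNorm a (b * k ^ 2) ↔ IsQuadNorm a b := by
  refine ⟨fun h => ?_, fun h => h.mul (sq a k)⟩
  simpa only [mul_assoc, ← mul_pow, mul_inv_cancel₀ hk, one_pow, mul_one]
    using h.mul (sq a k⁻¹)

lemma mul_left_iff (hb : b ≠ 0) (h : IsQuadNorm a b) :
    IsQuadNorm a (b * c) ↔ IsQuadNorm a c := by
  refine ⟨fun hbc => ?_, h.mul⟩
  rw [← mul_sq_iff hb, show c * b ^ 2 = b * (b * c) by ring]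
  exact h.mul hbc

lemma iff_of_mul (hb : b ≠ 0) (hc : c ≠ 0) (h : IsQuadNorm a (b * c)) :
    IsQuadNorm a b ↔ IsQuadNorm a c := by
  refine ⟨fun h' => (mul_left_iff hb h').1 h, fun h' => (mul_left_iff hc h').1 ?_⟩
  rwa [mul_comm]

lemma of_isSquare_left (h2 : (2 : F) ≠ 0) (ha : IsSquare a) (ha0 : a ≠ 0) (b : F) :
    IsQuadNorm a b := by
  obtain ⟨k, rfl⟩ := ha
  have hk : k ≠ 0 := left_ne_zero_of_mul ha0
  refine ⟨(b + 1) / 2, (b - 1) / (2 * k), ?_⟩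
  field_simp
  ring

lemma symm (h2 : (2 : F) ≠ 0) (hb : b ≠ 0) (h : IsQuadNorm a b) : IsQuadNorm b a := by
  obtain ⟨x, y, h⟩ := h
  by_cases hy : y = 0
  · exact of_isSquare_left h2 ⟨x, by linear_combination -h - a * y * hy⟩ hb a
  · refine ⟨x / y, 1 / y, ?_⟩
    rw [← h]
    field_simp
    ring

end Field

end IsQuadNorm

lemma isQuadNorm_of_finite {F : Type*} [Field F] [Finite F] (h2 : ringChar F ≠ 2) {a : F}
    (ha : a ≠ 0) (b : F) : IsQuadNorm a b := by
  have := Fintype.ofFinite F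
  open Polynomial in
  obtain ⟨x, y, h⟩ := FiniteField.exists_root_sum_quadratic (f := X ^ 2 - C b)
    (g := C (-a) * X ^ 2) (by compute_degree!)
    (degree_C_mul_X_pow 2 (neg_ne_zero.2 ha)) (FiniteField.odd_card_of_char_ne_two h2)
  simp only [Polynomial.eval_sub, Polynomial.eval_mul, Polynomial.eval_pow, Polynomial.eval_X,
    Polynomial.eval_C] at h
  exact ⟨x, y, by linear_combination h⟩

section Padic

variable {p : ℕ} [Fact p.Prime]

lemma isUnit_iff_toZMod_ne_zero {u : ℤ_[p]} : IsUnit u ↔ PadicInt.toZMod u ≠ 0 := by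
  rw [← not_iff_not, not_not, ← mem_nonunits_iff, ← IsLocalRing.mem_maximalIdeal,
    ← PadicInt.ker_toZMod, RingHom.mem_ker]

lemma isUnit_intCast_iff {a : ℤ} : IsUnit (a : ℤ_[p]) ↔ ¬ (p : ℤ) ∣ a := by
  rw [isUnit_iff_toZMod_ne_zero, map_intCast, Ne, ZMod.intCast_zmod_eq_zero_iff_dvd]

lemma isSquare_of_isSquare_toZMod (hp : p ≠ 2) {u : ℤ_[p]} (hu : IsUnit u)
    (h : IsSquare (PadicInt.toZMod u)) : IsSquare u := by
  obtain ⟨r, hr⟩ := h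
  obtain ⟨r, rfl⟩ := ZMod.ringHom_surjective (PadicInt.toZMod (p := p)) r
  have hr0 : PadicInt.toZMod r ≠ 0 := by
    intro h0
    exact isUnit_iff_toZMod_ne_zero.1 hu (by rw [hr, h0, mul_zero])
  have h2 : (1 + 1 : ZMod p) ≠ 0 := by
    rw [one_add_one_eq_two]
    exact Ring.two_ne_zero (by rwa [ZMod.ringChar_zmod_n])
  obtain ⟨s, hs, -⟩ := HenselianRing.is_henselian (I := IsLocalRing.maximalIdeal ℤ_[p])
    (Polynomial.X ^ 2 - Polynomial.C u) (Polynomial.monic_X_pow_sub_C u two_ne_zero) r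
    (by
      rw [← PadicInt.ker_toZMod, RingHom.mem_ker]
      simp [hr, pow_two])
    (IsUnit.map _ <| isUnit_iff_toZMod_ne_zero.2 <| by simp [h2, hr0])
  rw [Polynomial.IsRoot.def, Polynomial.eval_sub, Polynomial.eval_pow, Polynomial.eval_X,
    Polynomial.eval_C] at hs
  exact ⟨s, by linear_combination -hs⟩

lemma isQuadNorm_of_isUnit (hp : p ≠ 2) {a b : ℤ_[p]} (ha : IsUnit a) (hb : IsUnit b) :
    IsQuadNorm (a : ℚ_[p]) b := by
  obtain ⟨x, y, hxy⟩ := isQuadNorm_of_finite (by rwa [ZMod.ringChar_zmod_n])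
    (isUnit_iff_toZMod_ne_zero.1 ha) (PadicInt.toZMod b)
  obtain ⟨y, rfl⟩ := ZMod.ringHom_surjective (PadicInt.toZMod (p := p)) y
  by_cases hx : x = 0
  · have hsq : IsSquare (-a * b) := isSquare_of_isSquare_toZMod hp (ha.neg.mul hb)
      ⟨PadicInt.toZMod (a * y), by simp only [map_mul, map_neg, ← hxy, hx]; ring⟩
    obtain ⟨w, hw⟩ := hsq
    have ha0 : (-a : ℚ_[p]) ≠ 0 := by simpa using ha.ne_zero
    rw [← (IsQuadNorm.neg_self (a : ℚ_[p])).mul_left_iff ha0]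
    have := IsQuadNorm.sq (a : ℚ_[p]) w
    rwa [pow_two, ← PadicInt.coe_mul, ← hw, PadicInt.coe_mul, PadicInt.coe_neg] at this
  · have hmod : PadicInt.toZMod (b + a * y ^ 2) = x ^ 2 := by
      simp only [map_add, map_mul, map_pow, ← hxy]; ring
    obtain ⟨w, hw⟩ := isSquare_of_isSquare_toZMod hp
      (isUnit_iff_toZMod_ne_zero.2 (by rw [hmod]; exact pow_ne_zero 2 hx))
      (by rw [hmod]; exact IsSquare.sq x)
    exact IsQuadNorm.map PadicInt.Coe.ringHom ⟨w, y, by linear_combination -hw⟩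

lemma valuation_coe_of_isUnit {u : ℤ_[p]} (hu : IsUnit u) : (u : ℚ_[p]).valuation = 0 := by
  obtain ⟨v, huv⟩ := hu.exists_right_inv
  have h : u.valuation + v.valuation = 0 := by
    rw [← PadicInt.valuation_mul hu.ne_zero (right_ne_zero_of_mul_eq_one huv), huv,
      PadicInt.valuation_one]
  rw [PadicInt.valuation_coe, Nat.eq_zero_of_add_eq_zero_right h, Nat.cast_zero]

lemma not_odd_valuation_sq_mul_of_isUnit {u : ℤ_[p]} (hu : IsUnit u) (x : ℚ_[p]) :
    ¬ Odd (x ^ 2 * u).valuation := by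
  rcases eq_or_ne x 0 with rfl | hx
  · simp
  rw [Padic.valuation_mul (pow_ne_zero 2 hx) (by simpa using hu.ne_zero), Padic.valuation_pow,
    valuation_coe_of_isUnit hu, add_zero]
  simp

lemma isSquare_toZMod_of_odd_valuation {a : ℤ_[p]} {b : ℚ_[p]} (hb : Odd b.valuation)
    (h : IsQuadNorm (a : ℚ_[p]) b) : IsSquare (PadicInt.toZMod a) := by
  obtain ⟨x, y, rfl⟩ := h
  by_contra hsq
  rcases le_or_gt ‖x‖ ‖y‖ with hxy | hxy
  · have hy : y ≠ 0 := by
      rintro rfl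
      have : x = 0 := by simpa using hxy
      simp [this] at hb
    let z : ℤ_[p] := ⟨x / y, by rw [norm_div]; exact div_le_one_of_le₀ hxy (norm_nonneg y)⟩
    have hz : IsUnit (z ^ 2 - a) := by
      rw [isUnit_iff_toZMod_ne_zero, map_sub, map_pow, sub_ne_zero]
      exact fun h => hsq ⟨PadicInt.toZMod z, by rw [← h, pow_two]⟩
    apply not_odd_valuation_sq_mul_of_isUnit hz y
    convert hb using 2
    push_cast
    simp only [z]
    field_simp
  · have hx : x ≠ 0 := norm_pos_iff.1 ((norm_nonneg y).trans_lt hxy)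
    have hyx : ‖y / x‖ < 1 := by rw [norm_div]; exact (div_lt_one (norm_pos_iff.2 hx)).2 hxy
    let z : ℤ_[p] := ⟨y / x, hyx.le⟩
    have hz0 : PadicInt.toZMod z = 0 := by
      by_contra h0
      exact hyx.ne (PadicInt.isUnit_iff.1 (isUnit_iff_toZMod_ne_zero.2 h0))
    have hz : IsUnit (1 - a * z ^ 2) := by
      simp [isUnit_iff_toZMod_ne_zero, hz0]
    apply not_odd_valuation_sq_mul_of_isUnit hz x
    convert hb using 2
    push_cast
    simp only [z]
    field_simp

/-- The unit at `p` in the tame Hilbert symbol of `D` and `b`, for `p` exactly dividing `D` and `p²`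
not dividing `b`: the symbol is trivial exactly when this integer is a square modulo `p`. -/
def tameUnit (D b : ℤ) (p : ℕ) : ℤ := if (p : ℤ) ∣ b then -(D / p) * (b / p) else b

lemma isQuadNorm_iff_isSquare_of_not_dvd (hp : p ≠ 2) {D b : ℤ} (hD : (p : ℤ) ∣ D)
    (hD2 : ¬ (p : ℤ) ^ 2 ∣ D) (hb : ¬ (p : ℤ) ∣ b) :
    IsQuadNorm (D : ℚ_[p]) b ↔ IsSquare (b : ZMod p) := by
  obtain ⟨e, rfl⟩ := hD
  have he : ¬ (p : ℤ) ∣ e := fun h => hD2 (by rw [pow_two]; exact mul_dvd_mul_left _ h)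
  have hp0 : (p : ℚ_[p]) ≠ 0 := by exact_mod_cast (Fact.out : p.Prime).ne_zero
  have he0 : (e : ℚ_[p]) ≠ 0 := by exact_mod_cast fun h : e = 0 => he (h ▸ dvd_zero _)
  have hb0 : (b : ℚ_[p]) ≠ 0 := by exact_mod_cast fun h : b = 0 => hb (h ▸ dvd_zero _)
  have hval : (((p * e : ℤ)) : ℚ_[p]).valuation = 1 := by
    push_cast
    rw [Padic.valuation_mul hp0 he0, Padic.valuation_p, ← PadicInt.coe_intCast,
      valuation_coe_of_isUnit (isUnit_intCast_iff.2 he), add_zero]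
  constructor
  · intro h
    have h' : IsQuadNorm (((b : ℤ_[p]) : ℚ_[p])) ((p * e : ℤ) : ℚ_[p]) := by
      rw [PadicInt.coe_intCast]
      exact h.symm two_ne_zero hb0
    simpa using isSquare_toZMod_of_odd_valuation (by rw [hval]; exact odd_one) h'
  · intro h
    obtain ⟨w, hw⟩ := isSquare_of_isSquare_toZMod hp (isUnit_intCast_iff.2 hb) (by simpa using h)
    rw [← PadicInt.coe_intCast b, hw, ← pow_two, PadicInt.coe_pow]
    exact IsQuadNorm.sq _ _

lemma isQuadNorm_iff_isSquare_tameUnit (hp : p ≠ 2) {D b : ℤ} (hD : (p : ℤ) ∣ D)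
    (hD2 : ¬ (p : ℤ) ^ 2 ∣ D) (hb2 : ¬ (p : ℤ) ^ 2 ∣ b) :
    IsQuadNorm (D : ℚ_[p]) b ↔ IsSquare (tameUnit D b p : ZMod p) := by
  by_cases hb : (p : ℤ) ∣ b
  · have hpp : Prime (p : ℤ) := Nat.prime_iff_prime_int.1 Fact.out
    have hp0 : (p : ℚ_[p]) ≠ 0 := by exact_mod_cast (Fact.out : p.Prime).ne_zero
    have hD0 : (-D : ℚ_[p]) ≠ 0 :=
      neg_ne_zero.2 (by exact_mod_cast fun h : D = 0 => hD2 (h ▸ dvd_zero _))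
    obtain ⟨e, rfl⟩ := hD
    obtain ⟨b, rfl⟩ := hb
    rw [pow_two, mul_dvd_mul_iff_left hpp.ne_zero] at hb2
    have he : ¬ (p : ℤ) ∣ e := by rwa [pow_two, mul_dvd_mul_iff_left hpp.ne_zero] at hD2
    have hDb : (-(p * e : ℤ) : ℚ_[p]) * (p * b : ℤ) = (-e * b : ℤ) * (p : ℚ_[p]) ^ 2 := by
      push_cast
      ring
    have hunit : ¬ (p : ℤ) ∣ -e * b := fun h => (hpp.dvd_or_dvd h).elim (by rwa [dvd_neg]) hb2
    rw [tameUnit, if_pos (dvd_mul_right _ _), Int.mul_ediv_cancel_left _ hpp.ne_zero,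
      Int.mul_ediv_cancel_left _ hpp.ne_zero,
      ← (IsQuadNorm.neg_self _).mul_left_iff hD0, hDb, IsQuadNorm.mul_sq_iff hp0,
      isQuadNorm_iff_isSquare_of_not_dvd hp (dvd_mul_right _ _) hD2 hunit]
  · rw [tameUnit, if_neg hb, isQuadNorm_iff_isSquare_of_not_dvd hp hD hD2 hb]

end Padic

lemma isSquare_intCast_mul {m n : ℕ} (hmn : m.Coprime n) {a : ℤ} (hm : IsSquare (a : ZMod m))
    (hn : IsSquare (a : ZMod n)) : IsSquare (a : ZMod (m * n)) := by
  obtain ⟨x, hx⟩ := hm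
  obtain ⟨y, hy⟩ := hn
  have h : IsSquare (a : ZMod m × ZMod n) := ⟨(x, y), Prod.ext (by simpa) (by simpa)⟩
  simpa only [map_intCast] using h.map (ZMod.chineseRemainder hmn).symm

lemma isSquare_intCast_of_forall_prime {a : ℤ} {n : ℕ} (hn : Squarefree n)
    (h : ∀ p : ℕ, p.Prime → p ∣ n → IsSquare (a : ZMod p)) : IsSquare (a : ZMod n) := by
  induction n using Nat.recOnMul with
  | zero => exact absurd hn not_squarefree_zero
  | one => exact ⟨0, Subsingleton.elim _ _⟩
  | prime p hp => exact h p hp dvd_rfl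
  | mul m n ihm ihn =>
    obtain ⟨hmn, hm, hn⟩ := Nat.squarefree_mul_iff.1 hn
    exact isSquare_intCast_mul hmn (ihm hm fun p hp hpm => h p hp (hpm.mul_right n))
      (ihn hn fun p hp hpn => h p hp (hpn.mul_left m))

/-- `b` is a norm from `ℚ(√a)` at the real place and at every odd prime. The place two is left out:
the descent in `IsLocalQuadNorm.isQuadNorm` never needs it. -/
def IsLocalQuadNorm (a b : ℤ) : Prop :=
  IsQuadNorm (a : ℝ) b ∧ ∀ (p : ℕ) [Fact p.Prime], p ≠ 2 → IsQuadNorm (a : ℚ_[p]) b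

namespace IsLocalQuadNorm

variable {a b c : ℤ}

lemma symm (hb : b ≠ 0) (h : IsLocalQuadNorm a b) : IsLocalQuadNorm b a :=
  ⟨h.1.symm two_ne_zero (by exact_mod_cast hb),
    fun p _ hp => (h.2 p hp).symm two_ne_zero (by exact_mod_cast hb)⟩

lemma of_mul (hb : b ≠ 0) (hc : c ≠ 0) (hbc : IsQuadNorm a (b * c)) (h : IsLocalQuadNorm a b) :
    IsLocalQuadNorm a c :=
  ⟨(IsQuadNorm.iff_of_mul (by exact_mod_cast hb) (by exact_mod_cast hc)
      (by simpa using hbc.map (Int.castRingHom ℝ))).1 h.1,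
    fun p _ hp => (IsQuadNorm.iff_of_mul (by exact_mod_cast hb) (by exact_mod_cast hc)
      (by simpa using hbc.map (Int.castRingHom ℚ_[p]))).1 (h.2 p hp)⟩

lemma isSquare_intCast (hb : Squarefree b) (h : IsLocalQuadNorm a b) {p : ℕ} (hp : p.Prime)
    (hpb : p ∣ b.natAbs) : IsSquare (a : ZMod p) := by
  have := Fact.mk hp
  rcases eq_or_ne p 2 with rfl | hp2
  · exact FiniteField.isSquare_of_char_two (ZMod.ringChar_zmod_n 2) _
  · rw [← map_intCast (PadicInt.toZMod (p := p))]
    refine isSquare_toZMod_of_odd_valuation ?_ (b := b)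
      (by rw [PadicInt.coe_intCast]; exact h.2 p hp2)
    rw [Padic.valuation_intCast]
    have h1 : b.natAbs.factorization p = 1 :=
      ((Int.squarefree_natAbs.2 hb).natFactorization_le_one p).antisymm
        ((hp.dvd_iff_one_le_factorization (Int.natAbs_ne_zero.2 hb.ne_zero)).1 hpb)
    rw [padicValInt, ← Nat.factorization_def _ hp, h1]
    exact odd_one

lemma exists_sq_sub_eq_mul (hb : Squarefree b) (h : IsLocalQuadNorm a b) :
    ∃ t c : ℤ, 2 * t.natAbs ≤ b.natAbs ∧ t ^ 2 - a = b * c := by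
  obtain ⟨r, hr⟩ := isSquare_intCast_of_forall_prime (Int.squarefree_natAbs.2 hb)
    fun p hp hpb => h.isSquare_intCast hb hp hpb
  have : NeZero b.natAbs := ⟨Int.natAbs_ne_zero.2 hb.ne_zero⟩
  have hdvd : b ∣ r.valMinAbs ^ 2 - a := by
    rw [← Int.natAbs_dvd, ← ZMod.intCast_zmod_eq_zero_iff_dvd]
    push_cast
    rw [hr, pow_two, sub_self]
  obtain ⟨c, hc⟩ := hdvd
  exact ⟨r.valMinAbs, c, by have := r.natAbs_valMinAbs_le; omega, hc⟩

lemma exists_natAbs_lt_of_squarefree (hb : Squarefree b) (h : IsLocalQuadNorm a b)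
    (hab : a.natAbs ≤ b.natAbs) (hb1 : 1 < b.natAbs) :
    IsSquare a ∨ ∃ c : ℤ, c ≠ 0 ∧ c.natAbs < b.natAbs ∧ IsQuadNorm a (b * c) := by
  obtain ⟨t, c, ht, hc⟩ := h.exists_sq_sub_eq_mul hb
  rcases eq_or_ne c 0 with rfl | hc0
  · exact Or.inl ⟨t, by linear_combination -hc⟩
  refine Or.inr ⟨c, hc0, ?_, t, 1, by rw [← hc]; ring⟩
  have hsize : b.natAbs * c.natAbs ≤ t.natAbs ^ 2 + a.natAbs := by
    rw [← Int.natAbs_mul, ← hc, ← Int.natAbs_pow]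
    exact Int.natAbs_sub_le _ _
  have ht2 : (2 * t.natAbs) ^ 2 ≤ b.natAbs ^ 2 := Nat.pow_le_pow_left ht 2
  by_contra! hcb
  have hb2 : b.natAbs * b.natAbs ≤ b.natAbs * c.natAbs := Nat.mul_le_mul_left _ hcb
  nlinarith

lemma exists_natAbs_lt (hb0 : b ≠ 0) (h : IsLocalQuadNorm a b) (hab : a.natAbs ≤ b.natAbs)
    (hb1 : 1 < b.natAbs) :
    IsSquare a ∨ ∃ c : ℤ, c ≠ 0 ∧ c.natAbs < b.natAbs ∧ IsQuadNorm a (b * c) := by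
  by_cases hb : Squarefree b
  · exact h.exists_natAbs_lt_of_squarefree hb hab hb1
  obtain ⟨x, ⟨c, rfl⟩, hx⟩ : ∃ x : ℤ, x * x ∣ b ∧ ¬ IsUnit x := by
    simpa only [Squarefree, not_forall, exists_prop] using hb
  have hx0 : x ≠ 0 := by rintro rfl; simp at hb0
  have hc0 : c ≠ 0 := right_ne_zero_of_mul hb0
  refine Or.inr ⟨c, hc0, ?_, ?_⟩
  · rw [Int.isUnit_iff_natAbs_eq] at hx
    have hx1 : 1 < x.natAbs := by have := Int.natAbs_pos.2 hx0; omega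
    rw [Int.natAbs_mul, Int.natAbs_mul]
    exact lt_mul_of_one_lt_left (Int.natAbs_pos.2 hc0) (one_lt_mul'' hx1 hx1)
  · rw [show x * x * c * c = (x * c) ^ 2 by ring]
    exact IsQuadNorm.sq _ _

lemma isQuadNorm_of_natAbs_le_one (ha0 : a ≠ 0) (hb0 : b ≠ 0) (ha : a.natAbs ≤ 1)
    (hb : b.natAbs ≤ 1) (h : IsLocalQuadNorm a b) : IsQuadNorm (a : ℚ) b := by
  obtain rfl | rfl : b = 1 ∨ b = -1 := by omega
  · simpa using IsQuadNorm.sq (a : ℚ) 1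
  obtain rfl | rfl : a = 1 ∨ a = -1 := by omega
  · exact ⟨0, 1, by norm_num⟩
  · obtain ⟨x, y, hxy⟩ := h.1
    push_cast at hxy
    nlinarith [sq_nonneg x, sq_nonneg y]

-- Legendre's descent: replace the larger entry by a smaller one in the same norm class.
theorem isQuadNorm (ha : a ≠ 0) (hb : b ≠ 0) (h : IsLocalQuadNorm a b) :
    IsQuadNorm (a : ℚ) b := by
  have ha' : (a : ℚ) ≠ 0 := by exact_mod_cast ha
  have hb' : (b : ℚ) ≠ 0 := by exact_mod_cast hb
  induction hN : a.natAbs + b.natAbs using Nat.strong_induction_on generalizing a b with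
  | _ N ih =>
    wlog hab : a.natAbs ≤ b.natAbs generalizing a b
    · exact (this hb ha (h.symm hb) hb' ha' (by omega) (by omega)).symm two_ne_zero ha'
    rcases le_or_gt b.natAbs 1 with hb1 | hb1
    · exact h.isQuadNorm_of_natAbs_le_one ha hb (hab.trans hb1) hb1
    rcases h.exists_natAbs_lt hb hab hb1 with hsq | ⟨c, hc, hcb, hbc⟩
    · exact IsQuadNorm.of_isSquare_left two_ne_zero (hsq.map (Int.castRingHom ℚ)) ha' _
    · have hc' : (c : ℚ) ≠ 0 := by exact_mod_cast hc
      have hbc' : IsQuadNorm (a : ℚ) (b * c) := by simpa using hbc.map (Int.castRingHom ℚ)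
      rw [IsQuadNorm.iff_of_mul hb' hc' hbc']
      exact ih _ (by omega) ha hc (h.of_mul hb hc hbc) ha' hc' rfl

end IsLocalQuadNorm

section QuadraticExtension

variable {F K : Type*} [Field F] [Field K] [Algebra F K] [Algebra.IsQuadraticExtension F K]

lemma exists_conj_of_isQuadraticExtension [CharZero F] :
    ∃ σ : Gal(K/F), ∀ x : K, algebraMap F K (Algebra.trace F K x) = x + σ x ∧
      algebraMap F K (Algebra.norm F x) = x * σ x := by
  have hcard : Nat.card Gal(K/F) = 2 := by
    rw [IsGalois.card_aut_eq_finrank, Algebra.IsQuadraticExtension.finrank_eq_two]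
  obtain ⟨σ, hσ, hunique⟩ := (Nat.card_eq_two_iff' (1 : Gal(K/F))).1 hcard
  classical
  have huniv : (Finset.univ : Finset Gal(K/F)) = {1, σ} := by
    ext τ
    simpa using or_iff_not_imp_left.2 (hunique τ)
  refine ⟨σ, fun x => ⟨?_, ?_⟩⟩
  · rw [trace_eq_sum_automorphisms, huniv, Finset.sum_pair hσ.symm, AlgEquiv.one_apply]
  · rw [Algebra.norm_eq_prod_automorphisms, huniv, Finset.prod_pair hσ.symm, AlgEquiv.one_apply]

lemma exists_norm_eq_iff_isQuadNorm [CharZero F] {a n : F} (hn : n ≠ 0) {δ : K} (hδ0 : δ ≠ 0)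
    (hδ : Algebra.trace F K δ = 0) (hδa : δ ^ 2 = algebraMap F K a) :
    (∃ x : K, x ≠ 0 ∧ Algebra.norm F x = n) ↔ IsQuadNorm a n := by
  obtain ⟨σ, hσ⟩ := exists_conj_of_isQuadraticExtension (F := F) (K := K)
  have hσδ : σ δ = -δ := by
    have := (hσ δ).1
    rw [hδ, map_zero] at this
    linear_combination -this
  have : CharZero K := charZero_of_injective_algebraMap (algebraMap F K).injective
  constructor
  · rintro ⟨x, -, rfl⟩
    refine ⟨Algebra.trace F K x / 2, Algebra.trace F K (x * δ) / (2 * a),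
      (algebraMap F K).injective ?_⟩
    simp only [map_sub, map_mul, map_pow, map_div₀, map_ofNat, hσ, ← hδa, hσδ]
    field_simp
    ring
  · rintro ⟨u, v, rfl⟩
    have hnorm :
        Algebra.norm F (algebraMap F K u + algebraMap F K v * δ) = u ^ 2 - a * v ^ 2 := by
      apply (algebraMap F K).injective
      simp only [map_sub, map_mul, map_pow, map_add, hσ, hσδ, AlgEquiv.commutes, ← hδa]
      ring
    exact ⟨_, fun h => hn (by rw [← hnorm, h, Algebra.norm_zero]), hnorm⟩

end QuadraticExtension

section IntegralBasis

variable {K : Type*} [Field K]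

/-- The square root `αβ' - βα'` of the discriminant of a quadratic field with integral basis
`α`, `β`, written as `Tr(β) α - Tr(α) β` so that it visibly lies in the ring of integers. -/
noncomputable def sqrtDiscr (b : Module.Basis (Fin 2) ℤ (𝓞 K)) : 𝓞 K :=
  Algebra.trace ℤ (𝓞 K) (b 1) • b 0 - Algebra.trace ℤ (𝓞 K) (b 0) • b 1

lemma trace_sqrtDiscr (b : Module.Basis (Fin 2) ℤ (𝓞 K)) :
    Algebra.trace ℤ (𝓞 K) (sqrtDiscr b) = 0 := by
  rw [sqrtDiscr, map_sub, map_smul, map_smul, smul_eq_mul, smul_eq_mul]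
  ring

lemma dvd_trace_one_of_sqrtDiscr_eq_smul {b : Module.Basis (Fin 2) ℤ (𝓞 K)} {m : ℤ} {ε : 𝓞 K}
    (h : sqrtDiscr b = m • ε) : m ∣ Algebra.trace ℤ (𝓞 K) 1 := by
  have hcoord (i : Fin 2) : b.repr (sqrtDiscr b) i = m * b.repr ε i := by
    rw [h, map_smul, Finsupp.smul_apply, smul_eq_mul]
  have h0 : m ∣ Algebra.trace ℤ (𝓞 K) (b 0) := by
    have := hcoord 1
    simp only [sqrtDiscr, map_sub, map_smul, Module.Basis.repr_self] at this
    exact dvd_neg.1 ⟨_, by simpa using this⟩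
  have h1 : m ∣ Algebra.trace ℤ (𝓞 K) (b 1) := by
    have := hcoord 0
    simp only [sqrtDiscr, map_sub, map_smul, Module.Basis.repr_self] at this
    exact ⟨_, by simpa using this⟩
  rw [← b.sum_repr 1, Fin.sum_univ_two, map_add, map_smul, map_smul]
  exact dvd_add (h0.mul_left _) (h1.mul_left _)

variable [NumberField K] [Algebra.IsQuadraticExtension ℚ K]

variable (K) in
lemma exists_conj_ringOfIntegers :
    ∃ σ : Gal(K/ℚ), ∀ x : 𝓞 K, ((Algebra.trace ℤ (𝓞 K) x : ℤ) : K) = x + σ x ∧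
      ((Algebra.norm ℤ x : ℤ) : K) = x * σ x := by
  obtain ⟨σ, hσ⟩ := exists_conj_of_isQuadraticExtension (F := ℚ) (K := K)
  refine ⟨σ, fun x => ⟨?_, ?_⟩⟩
  · rw [← (hσ x).1, ← Algebra.coe_trace_int, map_intCast]
  · rw [← (hσ x).2, ← Algebra.coe_norm_int, map_intCast]

variable (K) in
/-- An integral basis of a quadratic field, indexed by `Fin 2`. -/
noncomputable def integralBasisFinTwo : Module.Basis (Fin 2) ℤ (𝓞 K) :=
  Module.finBasisOfFinrankEq ℤ (𝓞 K) <| by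
    rw [RingOfIntegers.rank, Algebra.IsQuadraticExtension.finrank_eq_two]

lemma sqrtDiscr_sq (b : Module.Basis (Fin 2) ℤ (𝓞 K)) :
    (sqrtDiscr b : K) ^ 2 = algebraMap ℚ K (discr K) := by
  obtain ⟨σ, hσ⟩ := exists_conj_ringOfIntegers K
  rw [← discr_eq_discr K b, Algebra.discr_def, Matrix.det_fin_two, sqrtDiscr]
  simp only [Algebra.traceMatrix_apply, Algebra.traceForm_apply, zsmul_eq_mul, map_sub, map_mul,
    map_intCast, Int.cast_sub, Int.cast_mul, hσ]
  ring

lemma exists_norm_eq_iff_isQuadNorm_discr {n : ℚ} (hn : n ≠ 0) :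
    (∃ x : K, x ≠ 0 ∧ Algebra.norm ℚ x = n) ↔ IsQuadNorm (discr K : ℚ) n := by
  let b := integralBasisFinTwo K
  have hsq := sqrtDiscr_sq b
  refine exists_norm_eq_iff_isQuadNorm hn (δ := (sqrtDiscr b : K)) ?_ ?_ hsq
  · rintro h
    rw [h, zero_pow two_ne_zero, eq_comm, map_eq_zero, Int.cast_eq_zero] at hsq
    exact discr_ne_zero K hsq
  · rw [← Algebra.coe_trace_int, trace_sqrtDiscr, Int.cast_zero]

lemma not_sq_dvd_discr {p : ℕ} (hp : p.Prime) (hp2 : p ≠ 2) : ¬ (p : ℤ) ^ 2 ∣ discr K := by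
  rintro ⟨e, he⟩
  let b := integralBasisFinTwo K
  have hp0 : (p : K) ≠ 0 := by exact_mod_cast hp.ne_zero
  have hsq : ((sqrtDiscr b : K) / p) ^ 2 = (e : ℤ) := by
    rw [div_pow, sqrtDiscr_sq, map_intCast, he]
    push_cast
    field_simp
  have hintegral : IsIntegral ℤ ((sqrtDiscr b : K) / p) :=
    IsIntegral.of_pow two_pos (by rw [hsq]; exact isIntegral_algebraMap (x := e))
  obtain ⟨ε, hε⟩ := (IsIntegralClosure.isIntegral_iff (A := 𝓞 K)).1 hintegral
  have hsmul : sqrtDiscr b = (p : ℤ) • ε := by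
    apply RingOfIntegers.ext
    rw [zsmul_eq_mul, RingOfIntegers.coe_eq_algebraMap (_ * ε), map_mul, map_intCast, hε,
      Int.cast_natCast, mul_div_cancel₀ _ hp0]
  have hdvd := dvd_trace_one_of_sqrtDiscr_eq_smul hsmul
  rw [← map_one (algebraMap ℤ (𝓞 K)), Algebra.trace_algebraMap, RingOfIntegers.rank,
    Algebra.IsQuadraticExtension.finrank_eq_two, nsmul_one] at hdvd
  exact hp2 ((Nat.prime_dvd_prime_iff_eq hp Nat.prime_two).1 (by exact_mod_cast hdvd))

variable (K) in
-- Stickelberger: `αα'ββ' = N(α)N(β)`, so `D = (αβ' - βα')²` and `(αβ' + βα')²` differ by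
-- `4N(α)N(β)`.
lemma discr_emod_four : discr K % 4 = 0 ∨ discr K % 4 = 1 := by
  obtain ⟨σ, hσ⟩ := exists_conj_ringOfIntegers K
  let b := integralBasisFinTwo K
  let s := Algebra.trace ℤ (𝓞 K) (b 0) * Algebra.trace ℤ (𝓞 K) (b 1) -
    Algebra.trace ℤ (𝓞 K) (b 0 * b 1)
  have hD : discr K = s ^ 2 - 4 * (Algebra.norm ℤ (b 0) * Algebra.norm ℤ (b 1)) := by
    apply Int.cast_injective (α := K)
    rw [← map_intCast (algebraMap ℚ K), ← sqrtDiscr_sq b, sqrtDiscr]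
    simp only [s, zsmul_eq_mul, map_sub, map_mul, map_intCast, Int.cast_sub, Int.cast_mul,
      Int.cast_pow, Int.cast_ofNat, hσ]
    ring
  rcases Int.even_or_odd' s with ⟨k, hk | hk⟩ <;> rw [hk] at hD
  · exact Or.inl (Int.emod_eq_zero_of_dvd
      ⟨k ^ 2 - Algebra.norm ℤ (b 0) * Algebra.norm ℤ (b 1), by rw [hD]; ring⟩)
  · right
    have : discr K = 1 + 4 * (k ^ 2 + k - Algebra.norm ℤ (b 0) * Algebra.norm ℤ (b 1)) := by
      rw [hD]; ring
    omega

end IntegralBasis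

section ProductFormula

open scoped NumberTheorySymbols

lemma jacobiSym_prod_right {ι : Type*} (a : ℤ) {s : Finset ι} {f : ι → ℕ}
    (hf : ∀ i ∈ s, f i ≠ 0) : J(a | ∏ i ∈ s, f i) = ∏ i ∈ s, J(a | f i) := by
  classical
  induction s using Finset.induction_on with
  | empty => simp
  | insert i s his ih =>
    rw [Finset.forall_mem_insert] at hf
    rw [Finset.prod_insert his, Finset.prod_insert his,
      jacobiSym.mul_right' a hf.1 (Finset.prod_ne_zero_iff.2 hf.2), ih hf.2]

lemma jacobiSym_eq_prod_primeFactors (a : ℤ) {n : ℕ} (hn : Squarefree n) :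
    J(a | n) = ∏ p ∈ n.primeFactors, J(a | p) := by
  conv_lhs => rw [← Nat.prod_primeFactors_of_squarefree hn]
  exact jacobiSym_prod_right a fun p hp => (Nat.prime_of_mem_primeFactors hp).ne_zero

lemma jacobiSym_eq_one_of_forall_isSquare {a : ℤ} {n : ℕ} (han : IsCoprime a n)
    (h : ∀ p : ℕ, p.Prime → p ∣ n → IsSquare (a : ZMod p)) : J(a | n) = 1 := by
  refine List.prod_eq_one fun x hx => ?_
  obtain ⟨p, hp, rfl⟩ := List.mem_pmap.1 hx
  have hpp := Nat.prime_of_mem_primeFactorsList hp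
  have := Fact.mk hpp
  have hpn := Nat.dvd_of_mem_primeFactorsList hp
  rw [legendreSym.eq_one_iff _ ?_]
  · exact h p hpp hpn
  · rw [Ne, ZMod.intCast_zmod_eq_zero_iff_dvd]
    exact fun hpa => (Nat.prime_iff_prime_int.1 hpp).not_isUnit
      (han.isUnit_of_dvd' hpa (Int.natCast_dvd_natCast.2 hpn))

lemma jacobiSym_comm_of_mod_four_eq_one {a : ℤ} (ha : a % 4 = 1) {b : ℕ} (hb : Odd b) :
    J(a | b) = J(b | a.natAbs) := by
  have hmod := Nat.odd_mod_four_iff.1 (Nat.odd_iff.1 hb)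
  rcases Int.natAbs_eq a with h | h
  · conv_lhs => rw [h]
    exact jacobiSym.quadratic_reciprocity_one_mod_four (by omega) hb
  · conv_lhs => rw [h, jacobiSym.neg _ hb]
    rcases hmod with hb1 | hb3
    · rw [ZMod.χ₄_nat_one_mod_four hb1, one_mul,
        jacobiSym.quadratic_reciprocity_one_mod_four' (by rw [Nat.odd_iff]; omega) hb1]
    · rw [ZMod.χ₄_nat_three_mod_four hb3,
        jacobiSym.quadratic_reciprocity_three_mod_four (by omega) hb3, neg_one_mul, neg_neg]

lemma jacobiSym_neg_comm_of_mul_mod_four_eq_one {d : ℕ} {e : ℤ} (h : d * e % 4 = 1) :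
    J(-e | d) = J(d | e.natAbs) := by
  have hd : Odd d := by
    rw [← Int.odd_coe_nat]
    exact (Int.odd_mul.1 (Int.odd_iff.2 (by omega : (d * e : ℤ) % 2 = 1))).1
  have hmod : d % 4 = 1 ∧ e % 4 = 1 ∨ d % 4 = 3 ∧ -e % 4 = 1 := by
    rw [Int.mul_emod] at h
    have hd4 : (d : ℤ) % 4 = 1 ∨ (d : ℤ) % 4 = 3 := by
      have := Nat.odd_iff.1 hd
      omega
    rcases hd4 with h4 | h4 <;> rw [h4] at h <;> omega
  rcases hmod with ⟨hd1, he⟩ | ⟨-, he⟩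
  · rw [jacobiSym.neg _ hd, ZMod.χ₄_nat_one_mod_four hd1, one_mul,
      jacobiSym_comm_of_mod_four_eq_one he hd]
  · rw [jacobiSym_comm_of_mod_four_eq_one he hd, Int.natAbs_neg]

variable {D : ℤ} {d c : ℕ}

lemma prod_jacobiSym_tameUnit {e : ℤ} (hD : Squarefree (d * e : ℤ)) (hc : IsCoprime (c : ℤ) e) :
    ∏ p ∈ (d * e : ℤ).natAbs.primeFactors, J(tameUnit (d * e) (d * c) p | p) =
      J(-(e * c) | d) * J(d * c | e.natAbs) := by
  rw [← Int.squarefree_natAbs, Int.natAbs_mul, Int.natAbs_natCast, Nat.squarefree_mul_iff] at hD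
  obtain ⟨hde, hd, he⟩ := hD
  rw [Int.natAbs_mul, Int.natAbs_natCast, hde.primeFactors_mul,
    Finset.prod_union hde.disjoint_primeFactors, jacobiSym_eq_prod_primeFactors _ hd,
    jacobiSym_eq_prod_primeFactors _ he]
  congr 1 <;> refine Finset.prod_congr rfl fun p hmem => ?_
  · obtain ⟨hp, hpd, -⟩ := Nat.mem_primeFactors.1 hmem
    obtain ⟨k, rfl⟩ := hpd
    have hp0 : (p : ℤ) ≠ 0 := mod_cast hp.ne_zero
    have hpk : IsCoprime (k : ℤ) p :=
      Nat.isCoprime_iff_coprime.2 (Nat.squarefree_mul_iff.1 hd).1.symm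
    have htame : tameUnit ((p * k : ℕ) * e) ((p * k : ℕ) * c) p = k ^ 2 * -(e * c) := by
      rw [tameUnit, if_pos (by push_cast; exact (dvd_mul_right _ _).mul_right _)]
      push_cast
      rw [mul_assoc, mul_assoc, Int.mul_ediv_cancel_left _ hp0, Int.mul_ediv_cancel_left _ hp0]
      ring
    rw [htame, jacobiSym.mul_left, jacobiSym.sq_one' (Int.isCoprime_iff_gcd_eq_one.1 hpk), one_mul]
  · obtain ⟨hp, hpe, -⟩ := Nat.mem_primeFactors.1 hmem
    have hpp := Nat.prime_iff_prime_int.1 hp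
    have hpe' : (p : ℤ) ∣ e := Int.natCast_dvd.2 hpe
    have hpd : ¬ (p : ℤ) ∣ d := fun h => hpp.not_isUnit
      ((Nat.isCoprime_iff_coprime.2 hde).isUnit_of_dvd' h (Int.natCast_dvd_natCast.2 hpe))
    have hpc : ¬ (p : ℤ) ∣ c := fun h => hpp.not_isUnit (hc.isUnit_of_dvd' h hpe')
    rw [tameUnit, if_neg (hpp.not_dvd_mul hpd hpc)]

theorem prod_jacobiSym_tameUnit_eq_one (hD4 : D % 4 = 1) (hD : Squarefree D) (hdD : (d : ℤ) ∣ D)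
    (hc : Odd c) (hcD : IsCoprime (c : ℤ) D)
    (hcsq : ∀ q : ℕ, q.Prime → q ∣ c → IsSquare (D : ZMod q)) :
    ∏ p ∈ D.natAbs.primeFactors, J(tameUnit D (d * c) p | p) = 1 := by
  obtain ⟨e, rfl⟩ := hdD
  obtain ⟨hd0, he0⟩ := mul_ne_zero_iff.1 hD.ne_zero
  have hcop : Int.gcd d e.natAbs = 1 := by
    rw [← Int.squarefree_natAbs, Int.natAbs_mul, Int.natAbs_natCast, Nat.squarefree_mul_iff] at hD
    exact hD.1
  have hcomm : J(c | d) * J(c | e.natAbs) = 1 := by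
    rw [← jacobiSym.mul_right' _ (mod_cast hd0) (Int.natAbs_ne_zero.2 he0),
      ← Int.natAbs_natCast d, ← Int.natAbs_mul, ← jacobiSym_comm_of_mod_four_eq_one hD4 hc,
      jacobiSym_eq_one_of_forall_isSquare hcD.symm hcsq]
  rw [prod_jacobiSym_tameUnit hD hcD.of_mul_right_right, neg_mul_eq_neg_mul, jacobiSym.mul_left,
    jacobiSym.mul_left, jacobiSym_neg_comm_of_mul_mod_four_eq_one hD4]
  calc J(d | e.natAbs) * J(c | d) * (J(d | e.natAbs) * J(c | e.natAbs))
      = J(d | e.natAbs) ^ 2 * (J(c | d) * J(c | e.natAbs)) := by ring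
    _ = 1 := by rw [hcomm, mul_one, jacobiSym.sq_one hcop]

theorem isSquare_tameUnit_of_forall_ne (hD4 : D % 4 = 1) (hD : Squarefree D) (hdD : (d : ℤ) ∣ D)
    (hc : Odd c) (hcD : IsCoprime (c : ℤ) D)
    (hcsq : ∀ q : ℕ, q.Prime → q ∣ c → IsSquare (D : ZMod q)) {r : ℕ} (hr : r.Prime)
    (hrD : (r : ℤ) ∣ D)
    (h : ∀ q : ℕ, q.Prime → (q : ℤ) ∣ D → q ≠ r → IsSquare (tameUnit D (d * c) q : ZMod q)) :
    IsSquare (tameUnit D (d * c) r : ZMod r) := by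
  have := Fact.mk hr
  have hprod := prod_jacobiSym_tameUnit_eq_one hD4 hD hdD hc hcD hcsq
  have hne := Finset.prod_ne_zero_iff.1 (hprod.trans_ne one_ne_zero)
  have hother : ∀ q ∈ D.natAbs.primeFactors, q ≠ r → J(tameUnit D (d * c) q | q) = 1 := by
    intro q hq hqr
    obtain ⟨hqp, hqD, -⟩ := Nat.mem_primeFactors.1 hq
    have := Fact.mk hqp
    refine ((jacobiSym.trichotomy _ _).resolve_left (hne q hq)).resolve_right fun hneg => ?_
    exact ZMod.nonsquare_of_jacobiSym_eq_neg_one hneg (h q hqp (Int.natCast_dvd.2 hqD) hqr)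
  have hrmem : r ∈ D.natAbs.primeFactors :=
    Nat.mem_primeFactors.2 ⟨hr, Int.natCast_dvd.1 hrD, Int.natAbs_ne_zero.2 hD.ne_zero⟩
  rw [Finset.prod_eq_single_of_mem r hrmem hother] at hprod
  exact ZMod.isSquare_of_jacobiSym_eq_one hprod

end ProductFormula

section LocalGlobal

lemma isQuadNorm_padic_of_not_dvd {p : ℕ} [Fact p.Prime] (hp : p ≠ 2) {D b : ℤ}
    (hpD : ¬ (p : ℤ) ∣ D) (hsq : (p : ℤ) ∣ b → IsSquare (D : ZMod p)) :
    IsQuadNorm (D : ℚ_[p]) b := by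
  have hD := isUnit_intCast_iff.2 hpD
  rw [← PadicInt.coe_intCast, ← PadicInt.coe_intCast]
  by_cases hpb : (p : ℤ) ∣ b
  · have hDsq := isSquare_of_isSquare_toZMod hp hD (by simpa using hsq hpb)
    exact IsQuadNorm.of_isSquare_left two_ne_zero (hDsq.map PadicInt.Coe.ringHom)
      (by simpa using hD.ne_zero) _
  · exact isQuadNorm_of_isUnit hp hD (isUnit_intCast_iff.2 hpb)

theorem isQuadNorm_iff_forall_isSquare_tameUnit {D b : ℤ} (hb : 0 < b)
    (hD2 : ∀ p : ℕ, p.Prime → p ≠ 2 → ¬ (p : ℤ) ^ 2 ∣ D)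
    (hb2 : ∀ p : ℕ, p.Prime → p ≠ 2 → (p : ℤ) ∣ D → ¬ (p : ℤ) ^ 2 ∣ b)
    (hsq : ∀ p : ℕ, p.Prime → p ≠ 2 → ¬ (p : ℤ) ∣ D → (p : ℤ) ∣ b → IsSquare (D : ZMod p)) :
    IsQuadNorm (D : ℚ) b ↔
      ∀ p : ℕ, p.Prime → p ≠ 2 → (p : ℤ) ∣ D → IsSquare (tameUnit D b p : ZMod p) := by
  constructor
  · intro h p hp hp2 hpD
    have := Fact.mk hp
    rw [← isQuadNorm_iff_isSquare_tameUnit hp2 hpD (hD2 p hp hp2) (hb2 p hp hp2 hpD)]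
    simpa using h.map (Rat.castHom ℚ_[p])
  · intro h
    have hD0 : D ≠ 0 := by
      rintro rfl
      exact hD2 3 Nat.prime_three (by norm_num) (dvd_zero _)
    refine IsLocalQuadNorm.isQuadNorm hD0 hb.ne' ⟨?_, fun p hp hp2 => ?_⟩
    · rw [← Real.sq_sqrt (by exact_mod_cast hb.le : (0 : ℝ) ≤ b)]
      exact IsQuadNorm.sq _ _
    · by_cases hpD : (p : ℤ) ∣ D
      · exact (isQuadNorm_iff_isSquare_tameUnit hp2 hpD (hD2 p hp.out hp2) (hb2 p hp.out hp2 hpD)).2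
          (h p hp.out hp2 hpD)
      · exact isQuadNorm_padic_of_not_dvd hp2 hpD (hsq p hp.out hp2 hpD)

lemma isQuadNorm_mul_iff_forall_isSquare_tameUnit {D : ℤ} {d c : ℕ}
    (hD2 : ∀ p : ℕ, p.Prime → p ≠ 2 → ¬ (p : ℤ) ^ 2 ∣ D) (hd : Squarefree d)
    (hdD : (d : ℤ) ∣ D) (hc : c ≠ 0) (hcD : IsCoprime (c : ℤ) D)
    (hcsq : ∀ q : ℕ, q.Prime → q ∣ c → IsSquare (D : ZMod q)) :
    IsQuadNorm (D : ℚ) ((d * c : ℕ) : ℚ) ↔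
      ∀ p : ℕ, p.Prime → p ≠ 2 → (p : ℤ) ∣ D → IsSquare (tameUnit D (d * c) p : ZMod p) := by
  have hb : (0 : ℤ) < d * c := mod_cast Nat.mul_pos (Nat.pos_of_ne_zero hd.ne_zero) hc.bot_lt
  have key := isQuadNorm_iff_forall_isSquare_tameUnit hb hD2 ?_ ?_
  · simpa using key
  · intro p hp _ hpD hpb
    have hpp := Nat.prime_iff_prime_int.1 hp
    have hpc : ¬ (p : ℤ) ∣ c := fun hpc => hpp.not_isUnit (hcD.isUnit_of_dvd' hpc hpD)
    have hpd : p ^ 2 ∣ d := by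
      exact_mod_cast hpp.pow_dvd_of_dvd_mul_right 2 hpc hpb
    exact hp.not_isUnit (hd p (by rwa [← pow_two]))
  · intro p hp _ hpD hpb
    have hpp := Nat.prime_iff_prime_int.1 hp
    exact hcsq p hp (mod_cast (hpp.dvd_or_dvd hpb).resolve_left fun h => hpD (h.trans hdD))

end LocalGlobal

section AdditiveLegendre

variable {p : ℕ} {a b : ℤ}

lemma aLeg_eq_zero_iff : aLeg a p = 0 ↔ IsSquare (a : ZMod p) := by
  rw [aLeg]
  split_ifs with h <;> simp [h]

lemma neg_one_pow_aLeg_val [Fact p.Prime] (ha : (a : ZMod p) ≠ 0) :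
    (-1 : ℤ) ^ (aLeg a p).val = legendreSym p a := by
  rw [aLeg]
  split_ifs with h
  · rw [(legendreSym.eq_one_iff p ha).2 h, ZMod.val_zero, pow_zero]
  · rw [(legendreSym.eq_neg_one_iff p).2 h, ZMod.val_one, pow_one]

lemma aLeg_one : aLeg 1 p = 0 := by simp [aLeg_eq_zero_iff]

lemma aLeg_mul (hp : p.Prime) (ha : ¬ (p : ℤ) ∣ a) (hb : ¬ (p : ℤ) ∣ b) :
    aLeg (a * b) p = aLeg a p + aLeg b p := by
  have := Fact.mk hp
  rw [← ZMod.intCast_zmod_eq_zero_iff_dvd] at ha hb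
  have hab : ((a * b : ℤ) : ZMod p) ≠ 0 := by simp [ha, hb]
  have hinj : ∀ x y z : ZMod 2, (-1 : ℤ) ^ x.val = (-1) ^ y.val * (-1) ^ z.val → x = y + z := by
    decide
  apply hinj
  rw [neg_one_pow_aLeg_val hab, neg_one_pow_aLeg_val ha, neg_one_pow_aLeg_val hb, legendreSym.mul]

lemma aLeg_pow_val (x : ZMod 2) : aLeg (a ^ x.val) p = aLeg a p * x := by
  obtain rfl | rfl : x = 0 ∨ x = 1 := by
    revert x
    decide
  · rw [ZMod.val_zero, pow_zero, aLeg_one, mul_zero]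
  · rw [ZMod.val_one, pow_one, mul_one]

lemma aLeg_prod (hp : p.Prime) {ι : Type*} {s : Finset ι} {f : ι → ℤ}
    (hf : ∀ i ∈ s, ¬ (p : ℤ) ∣ f i) : aLeg (∏ i ∈ s, f i) p = ∑ i ∈ s, aLeg (f i) p := by
  classical
  induction s using Finset.induction_on with
  | empty => simp [aLeg_one]
  | insert i s his ih =>
    rw [Finset.forall_mem_insert] at hf
    have hprod : ¬ (p : ℤ) ∣ ∏ j ∈ s, f j := fun h =>
      let ⟨j, hj, hd⟩ := (Prime.dvd_finsetProd_iff (Nat.prime_iff_prime_int.1 hp) _).1 h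
      hf.2 j hj hd
    rw [Finset.prod_insert his, Finset.sum_insert his, aLeg_mul hp hf.1 hprod, ih hf.2]

lemma aLeg_neg_one_of_mod_four_eq_one (hp : p.Prime) (h4 : p % 4 = 1) : aLeg (-1) p = 0 := by
  have := Fact.mk hp
  rw [aLeg_eq_zero_iff, Int.cast_neg, Int.cast_one, ZMod.exists_sq_eq_neg_one_iff]
  omega

-- Either `p* = -p`, or `p* = p` and `-1` is a square modulo `p`.
lemma aLeg_ediv_star (hp : p.Prime) (hp2 : p ≠ 2) (hpa : ¬ (p : ℤ) ∣ a / p) :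
    aLeg (a / ((-1) ^ ((p - 1) / 2) * (p : ℤ))) p = aLeg (-(a / p)) p := by
  have hodd := hp.eq_two_or_odd.resolve_left hp2
  obtain h4 | h4 : p % 4 = 1 ∨ p % 4 = 3 := by omega
  · have heven : Even ((p - 1) / 2) := by rw [Nat.even_iff]; omega
    have hone : ¬ (p : ℤ) ∣ -1 := by
      rw [dvd_neg, ← isUnit_iff_dvd_one]
      exact (Nat.prime_iff_prime_int.1 hp).not_isUnit
    rw [heven.neg_one_pow, one_mul, neg_eq_neg_one_mul, aLeg_mul hp hone hpa,
      aLeg_neg_one_of_mod_four_eq_one hp h4, zero_add]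
  · have hodd : Odd ((p - 1) / 2) := by rw [Nat.odd_iff]; omega
    rw [hodd.neg_one_pow, neg_one_mul, Int.ediv_neg]

end AdditiveLegendre

section SquarefreeDivisors

variable {ι : Type*} [Fintype ι] {p : ι → ℕ}

/-- The squarefree product `∏ pᵢ ^ xᵢ` attached to a vector over `𝔽₂`, each exponent being lifted to
`{0, 1}`. -/
def primeProd (p : ι → ℕ) (X : ι → ZMod 2) : ℕ := ∏ i, p i ^ (X i).val

/-- The vector over `𝔽₂` of the exponents of the primes `pᵢ` in `d`, written `X_d` in the theory of
Rédei matrices. -/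
def exponentVector (p : ι → ℕ) (d : ℕ) : ι → ZMod 2 := fun i => padicValNat (p i) d

lemma primeProd_ne_zero (hp : ∀ i, (p i).Prime) (X : ι → ZMod 2) : primeProd p X ≠ 0 :=
  Finset.prod_ne_zero_iff.2 fun i _ => pow_ne_zero _ (hp i).ne_zero

lemma factorization_primeProd (hp : ∀ i, (p i).Prime) (X : ι → ZMod 2) (q : ℕ) :
    (primeProd p X).factorization q = ∑ i, if p i = q then (X i).val else 0 := by
  rw [primeProd, Nat.factorization_prod fun i _ => pow_ne_zero _ (hp i).ne_zero,
    Finsupp.finsetSum_apply]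
  simp only [(hp _).factorization_pow, Finsupp.single_apply]

lemma factorization_primeProd_apply (hp : ∀ i, (p i).Prime) (hinj : p.Injective) (X : ι → ZMod 2)
    (i : ι) : (primeProd p X).factorization (p i) = (X i).val := by
  rw [factorization_primeProd hp X, Finset.sum_eq_single_of_mem i (Finset.mem_univ i)
    fun j _ hji => if_neg (hinj.ne hji), if_pos rfl]

lemma factorization_primeProd_eq_zero (hp : ∀ i, (p i).Prime) (X : ι → ZMod 2) {q : ℕ}
    (hq : ∀ i, p i ≠ q) : (primeProd p X).factorization q = 0 := by
  rw [factorization_primeProd hp X]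
  exact Finset.sum_eq_zero fun i _ => if_neg (hq i)

lemma squarefree_primeProd (hp : ∀ i, (p i).Prime) (hinj : p.Injective) (X : ι → ZMod 2) :
    Squarefree (primeProd p X) := by
  refine Nat.squarefree_of_factorization_le_one (primeProd_ne_zero hp X) fun q => ?_
  by_cases hq : ∃ i, p i = q
  · obtain ⟨i, rfl⟩ := hq
    rw [factorization_primeProd_apply hp hinj]
    exact Nat.le_of_lt_succ (ZMod.val_lt (X i))
  · rw [factorization_primeProd_eq_zero hp X (not_exists.1 hq)]
    exact zero_le_one

lemma primeProd_dvd (hp : ∀ i, (p i).Prime) (hinj : p.Injective) {n : ℕ} (hn : ∀ i, p i ∣ n)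
    (X : ι → ZMod 2) : primeProd p X ∣ n := by
  refine Finset.prod_dvd_of_isRelPrime (fun i _ j _ hij => ?_) fun i _ => ?_
  · exact Nat.coprime_iff_isRelPrime.1
      (((Nat.coprime_primes (hp i) (hp j)).2 (hinj.ne hij)).pow _ _)
  · exact (pow_dvd_pow _ (Nat.le_of_lt_succ (ZMod.val_lt (X i)))).trans (by simpa using hn i)

lemma primeProd_exponentVector (hp : ∀ i, (p i).Prime) (hinj : p.Injective) {d : ℕ}
    (hd : Squarefree d) (hdp : ∀ q : ℕ, q.Prime → q ∣ d → ∃ i, p i = q) :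
    primeProd p (exponentVector p d) = d := by
  refine Nat.eq_of_factorization_eq (primeProd_ne_zero hp _) hd.ne_zero fun q => ?_
  by_cases hq : ∃ i, p i = q
  · obtain ⟨i, rfl⟩ := hq
    rw [factorization_primeProd_apply hp hinj, exponentVector, ← Nat.factorization_def _ (hp i),
      ZMod.val_natCast, Nat.mod_eq_of_lt (Nat.lt_succ_of_le (hd.natFactorization_le_one _))]
  · rw [factorization_primeProd_eq_zero hp _ (not_exists.1 hq), eq_comm]
    exact Nat.factorization_eq_zero_iff _ _ |>.2 (by tauto)

lemma exponentVector_primeProd (hp : ∀ i, (p i).Prime) (hinj : p.Injective) (X : ι → ZMod 2) :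
    exponentVector p (primeProd p X) = X := by
  ext i
  rw [exponentVector, ← Nat.factorization_def _ (hp i), factorization_primeProd_apply hp hinj,
    ZMod.natCast_zmod_val]

end SquarefreeDivisors

section Redei

variable {D : ℤ} {t : ℕ} {p : Fin t → ℕ}

lemma redeiMatrix_mulVec_apply (hp : ∀ i, (p i).Prime) (X : Fin t → ZMod 2) (i : Fin (t - 1))
    {k : Fin t} (hik : i.castLE (Nat.sub_le t 1) = k) (hk2 : p k ≠ 2)
    (hkD : ¬ (p k : ℤ) ∣ D / p k) :
    (redeiMatrix D t p).mulVec X i =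
      aLeg (-(D / p k)) (p k) * X k + ∑ j ∈ Finset.univ.erase k, aLeg (p j) (p k) * X j := by
  subst hik
  rw [Matrix.mulVec, dotProduct,
    ← Finset.add_sum_erase _ _ (Finset.mem_univ (i.castLE (Nat.sub_le t 1)))]
  congr 1
  · rw [redeiMatrix, Matrix.of_apply, if_pos rfl, aLeg_ediv_star (hp _) hk2 hkD]
  · refine Finset.sum_congr rfl fun j hj => ?_
    rw [redeiMatrix, Matrix.of_apply, if_neg fun h => Finset.ne_of_mem_erase hj (Fin.ext h.symm)]

lemma tameUnit_pow_val_mul {q : ℕ} (hq : q.Prime) (x : ZMod 2) {E : ℤ} (hE : ¬ (q : ℤ) ∣ E) :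
    tameUnit D (q ^ x.val * E) q = (-(D / q)) ^ x.val * E := by
  obtain rfl | rfl : x = 0 ∨ x = 1 := by
    revert x
    decide
  · rw [ZMod.val_zero, pow_zero, pow_zero, one_mul, tameUnit, if_neg hE]
  · rw [ZMod.val_one, pow_one, pow_one, tameUnit, if_pos (dvd_mul_right _ _),
      Int.mul_ediv_cancel_left _ (mod_cast hq.ne_zero)]

lemma aLeg_tameUnit_primeProd {ι : Type*} [Fintype ι] [DecidableEq ι] {p : ι → ℕ}
    (hp : ∀ i, (p i).Prime) (hinj : p.Injective) (X : ι → ZMod 2) {c : ℕ} (k : ι)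
    (hkD : ¬ (p k : ℤ) ∣ D / p k) (hkc : ¬ (p k : ℤ) ∣ c) :
    aLeg (tameUnit D (primeProd p X * c) (p k)) (p k) =
      aLeg (-(D / p k)) (p k) * X k + ∑ j ∈ Finset.univ.erase k, aLeg (p j) (p k) * X j +
        aLeg c (p k) := by
  have hpp := Nat.prime_iff_prime_int.1 (hp k)
  let E : ℤ := ∏ j ∈ Finset.univ.erase k, (p j : ℤ) ^ (X j).val
  have hpow : ∀ j ∈ Finset.univ.erase k, ¬ (p k : ℤ) ∣ (p j : ℤ) ^ (X j).val := by
    intro j hj h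
    have hkj : p k ∣ p j := by exact_mod_cast hpp.dvd_of_dvd_pow h
    exact Finset.ne_of_mem_erase hj
      (hinj ((Nat.prime_dvd_prime_iff_eq (hp k) (hp j)).1 hkj)).symm
  have hE : ¬ (p k : ℤ) ∣ E := fun h =>
    let ⟨j, hj, hd⟩ := (hpp.dvd_finsetProd_iff _).1 h
    hpow j hj hd
  have hprod : (primeProd p X : ℤ) = (p k : ℤ) ^ (X k).val * E := by
    rw [primeProd, Nat.cast_prod, ← Finset.mul_prod_erase _ _ (Finset.mem_univ k)]
    simp only [Nat.cast_pow, E]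
  have hunit : ¬ (p k : ℤ) ∣ (-(D / p k)) ^ (X k).val := fun h =>
    hkD (by simpa using hpp.dvd_of_dvd_pow h)
  rw [hprod, mul_assoc, tameUnit_pow_val_mul (hp k) _ (hpp.not_dvd_mul hE hkc),
    aLeg_mul (hp k) hunit (hpp.not_dvd_mul hE hkc), aLeg_mul (hp k) hE hkc, aLeg_pow_val,
    aLeg_prod (hp k) hpow, ← add_assoc]
  simp only [aLeg_pow_val]

theorem redeiMatrix_mulVec_apply_eq_iff (hp : ∀ i, (p i).Prime) (hinj : p.Injective)
    (X : Fin t → ZMod 2) {c : ℕ} (i : Fin (t - 1)) {k : Fin t}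
    (hik : i.castLE (Nat.sub_le t 1) = k) (hk2 : p k ≠ 2) (hkD : ¬ (p k : ℤ) ∣ D / p k)
    (hkc : ¬ (p k : ℤ) ∣ c) :
    (redeiMatrix D t p).mulVec X i = aLeg c (p k) ↔
      IsSquare (tameUnit D (primeProd p X * c) (p k) : ZMod (p k)) := by
  rw [← aLeg_eq_zero_iff, aLeg_tameUnit_primeProd hp hinj X k hkD hkc,
    redeiMatrix_mulVec_apply hp X i hik hk2 hkD, CharTwo.add_eq_zero]

end Redei

section LastPrime

variable {D : ℤ} {t : ℕ} {p : Fin t → ℕ} {c : ℕ}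

/-- `p` lists every prime divisor of `D` exactly once, the prime two coming last if it occurs: the
ordering of the ramified primes that indexes the Rédei matrix. -/
structure IsRamifiedEnumeration (D : ℤ) {t : ℕ} (p : Fin t → ℕ) : Prop where
  prime : ∀ i, (p i).Prime
  injective : p.Injective
  dvd : ∀ i, (p i : ℤ) ∣ D
  exists_eq : ∀ q : ℕ, q.Prime → (q : ℤ) ∣ D → ∃ i, p i = q
  two_last : ∀ i : Fin t, p i = 2 → (i : ℕ) = t - 1

/-- The solutions `X` over `𝔽₂` of the linear system `R X = C` with `R` the Rédei matrix and `C` the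
vector of additive Legendre symbols `[c / pᵢ]`. -/
def redeiSolutions (D : ℤ) (p : Fin t → ℕ) (c : ℕ) : Set (Fin t → ZMod 2) :=
  {X | (redeiMatrix D t p).mulVec X = fun i => aLeg c (p (i.castLE (Nat.sub_le t 1)))}

lemma mem_redeiSolutions_iff (hp : IsRamifiedEnumeration D p)
    (hD2 : ∀ q : ℕ, q.Prime → q ≠ 2 → ¬ (q : ℤ) ^ 2 ∣ D) (hcD : IsCoprime (c : ℤ) D)
    {X : Fin t → ZMod 2} :
    X ∈ redeiSolutions D p c ↔ ∀ k : Fin t, (k : ℕ) < t - 1 →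
      IsSquare (tameUnit D (primeProd p X * c) (p k) : ZMod (p k)) := by
  have hrow (i : Fin (t - 1)) {k : Fin t} (hik : i.castLE (Nat.sub_le t 1) = k) :
      (redeiMatrix D t p).mulVec X i = aLeg c (p k) ↔
        IsSquare (tameUnit D (primeProd p X * c) (p k) : ZMod (p k)) := by
    have hk2 : p k ≠ 2 := fun h => i.isLt.ne ((congrArg Fin.val hik).trans (hp.two_last k h))
    have hkD : ¬ (p k : ℤ) ∣ D / p k := fun h => hD2 _ (hp.prime k) hk2 <| by
      rw [pow_two, ← Int.mul_ediv_cancel' (hp.dvd k)]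
      exact mul_dvd_mul_left _ h
    have hkc : ¬ (p k : ℤ) ∣ c := fun h =>
      (Nat.prime_iff_prime_int.1 (hp.prime k)).not_isUnit (hcD.isUnit_of_dvd' h (hp.dvd k))
    exact redeiMatrix_mulVec_apply_eq_iff hp.prime hp.injective X i hik hk2 hkD hkc
  simp only [redeiSolutions, Set.mem_ofPred_eq, funext_iff]
  exact ⟨fun h k hk => (hrow ⟨k, hk⟩ rfl).1 (h ⟨k, hk⟩), fun h i => (hrow i rfl).2 (h _ i.isLt)⟩

lemma squarefree_of_odd (hD : Odd D) (hD2 : ∀ q : ℕ, q.Prime → q ≠ 2 → ¬ (q : ℤ) ^ 2 ∣ D) :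
    Squarefree D := by
  rw [← Int.squarefree_natAbs, Nat.squarefree_iff_prime_squarefree]
  rintro q hq hqD
  rw [← Int.natCast_dvd, Nat.cast_mul, ← pow_two] at hqD
  refine hD2 q hq ?_ hqD
  rintro rfl
  exact Int.not_even_iff_odd.2 hD (even_iff_two_dvd.2 ((dvd_pow_self 2 two_ne_zero).trans hqD))

-- For odd `D` the last prime is covered by the product formula; for even `D` it is two.
theorem forall_isSquare_tameUnit_iff_forall_lt (hp : IsRamifiedEnumeration D p)
    (hD4 : D % 4 = 0 ∨ D % 4 = 1) (hD2 : ∀ q : ℕ, q.Prime → q ≠ 2 → ¬ (q : ℤ) ^ 2 ∣ D)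
    (hc : Odd c) (hcD : IsCoprime (c : ℤ) D)
    (hcsq : ∀ q : ℕ, q.Prime → q ∣ c → IsSquare (D : ZMod q)) {d : ℕ} (hdD : (d : ℤ) ∣ D) :
    (∀ q : ℕ, q.Prime → q ≠ 2 → (q : ℤ) ∣ D → IsSquare (tameUnit D (d * c) q : ZMod q)) ↔
      ∀ k : Fin t, (k : ℕ) < t - 1 → IsSquare (tameUnit D (d * c) (p k) : ZMod (p k)) := by
  refine ⟨fun h k hk => h _ (hp.prime k) (fun hk2 => hk.ne (hp.two_last k hk2)) (hp.dvd k),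
    fun h q hq hq2 hqD => ?_⟩
  obtain ⟨k, rfl⟩ := hp.exists_eq q hq hqD
  by_cases hk : (k : ℕ) < t - 1
  · exact h k hk
  have hklast : (k : ℕ) = t - 1 := by omega
  have hDodd : ¬ (2 : ℤ) ∣ D := by
    intro h2D
    obtain ⟨j, hj⟩ := hp.exists_eq 2 Nat.prime_two h2D
    exact hq2 (Fin.ext (hklast.trans (hp.two_last j hj).symm) ▸ hj)
  have hD1 : D % 4 = 1 := by omega
  have hsqf := squarefree_of_odd (by rw [Int.odd_iff]; omega) hD2
  refine isSquare_tameUnit_of_forall_ne hD1 hsqf hdD hc hcD hcsq hq hqD fun r hr hrD hrk => ?_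
  obtain ⟨j, rfl⟩ := hp.exists_eq r hr hrD
  have hjk : (j : ℕ) ≠ k := fun hjk => hrk (congrArg p (Fin.ext hjk))
  exact h j (by omega)

end LastPrime

section NormDivisors

/-- The squarefree positive divisors `d` of the discriminant of `K` such that `d * c` is the norm of
an element of `K^×`, that is, the set `{d ∈ D(K) : d·c ∈ N(K^×)}`. -/
def normDivisors (K : Type*) [Field K] [NumberField K] (c : ℕ) : Set ℕ :=
  {d : ℕ | 0 < d ∧ Squarefree d ∧ (d : ℤ) ∣ discr K ∧
    ∃ x : K, x ≠ 0 ∧ Algebra.norm ℚ x = ((d * c : ℕ) : ℚ)}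

variable {K : Type*} [Field K] [NumberField K] [Algebra.IsQuadraticExtension ℚ K]
  {t : ℕ} {p : Fin t → ℕ} {c : ℕ}

theorem mem_redeiSolutions_iff_primeProd_mem_normDivisors (hp : IsRamifiedEnumeration (discr K) p)
    (hc : Odd c) (hcD : IsCoprime (c : ℤ) (discr K))
    (hcsq : ∀ q : ℕ, q.Prime → q ∣ c → IsSquare (discr K : ZMod q)) {X : Fin t → ZMod 2} :
    X ∈ redeiSolutions (discr K) p c ↔ primeProd p X ∈ normDivisors K c := by
  have hD2 : ∀ q : ℕ, q.Prime → q ≠ 2 → ¬ (q : ℤ) ^ 2 ∣ discr K := fun _ => not_sq_dvd_discr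
  have hd := squarefree_primeProd hp.prime hp.injective X
  have hd0 := Nat.pos_of_ne_zero hd.ne_zero
  have hdD : (primeProd p X : ℤ) ∣ discr K := Int.natCast_dvd.2 <|
    primeProd_dvd hp.prime hp.injective (fun i => Int.natCast_dvd.1 (hp.dvd i)) X
  have hdc : ((primeProd p X * c : ℕ) : ℚ) ≠ 0 := mod_cast mul_ne_zero hd.ne_zero hc.pos.ne'
  rw [mem_redeiSolutions_iff hp hD2 hcD,
    ← forall_isSquare_tameUnit_iff_forall_lt hp (discr_emod_four K) hD2 hc hcD hcsq hdD,
    ← isQuadNorm_mul_iff_forall_isSquare_tameUnit hD2 hd hdD hc.pos.ne' hcD hcsq,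
    ← exists_norm_eq_iff_isQuadNorm_discr hdc]
  simp only [normDivisors, Set.mem_ofPred_eq, hd0, hd, hdD, true_and]

theorem stmt_6_general (hp : IsRamifiedEnumeration (discr K) p) (hc : Odd c)
    (hcD : IsCoprime (c : ℤ) (discr K))
    (hcsq : ∀ q : ℕ, q.Prime → q ∣ c → IsSquare (discr K : ZMod q)) :
    Set.MapsTo (exponentVector p) (normDivisors K c) (redeiSolutions (discr K) p c) ∧
      Set.MapsTo (primeProd p) (redeiSolutions (discr K) p c) (normDivisors K c) ∧
      Set.InvOn (primeProd p) (exponentVector p) (normDivisors K c)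
        (redeiSolutions (discr K) p c) := by
  have hmem (X : Fin t → ZMod 2) :
      X ∈ redeiSolutions (discr K) p c ↔ primeProd p X ∈ normDivisors K c :=
    mem_redeiSolutions_iff_primeProd_mem_normDivisors hp hc hcD hcsq
  have hleft : Set.LeftInvOn (primeProd p) (exponentVector p) (normDivisors K c) := fun d hd =>
    primeProd_exponentVector hp.prime hp.injective hd.2.1 fun q hq hqd =>
      hp.exists_eq q hq ((Int.natCast_dvd_natCast.2 hqd).trans hd.2.2.1)
  have hright : Set.RightInvOn (primeProd p) (exponentVector p) (redeiSolutions (discr K) p c) :=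
    fun X _ => exponentVector_primeProd hp.prime hp.injective X
  refine ⟨fun d hd => ?_, fun X => (hmem X).1, hleft, hright⟩
  rwa [hmem, hleft hd]

end NormDivisors

/-- for `c` positive, odd, coprime to `D` with `(D/q) = 1` for all primes `q ∣ c`,
the map `d ↦ X_d` is a bijection from `{d ∈ D(K) : d·c ∈ N(K^×)}` onto `{X : R·X = C}`, where
`C = ([c/p₁], …, [c/p_{t−1}])ᵀ`, with inverse `(x₁, …, x_t) ↦ Π p_i^{x_i}`. -/
theorem stmt_6 (K : Type) [Field K] [NumberField K]
    (hdeg : Module.finrank ℚ K = 2)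
    (him : ∀ v : InfinitePlace K, v.IsComplex)
    (D : ℤ) (hD : D = discr K)
    (t : ℕ) (p : Fin t → ℕ) (hp : ∀ i, (p i).Prime) (hinj : Function.Injective p)
    (hdvd : ∀ i, (p i : ℤ) ∣ D)
    (hall : ∀ q : ℕ, q.Prime → (q : ℤ) ∣ D → ∃ i, p i = q)
    (hord : ∀ i : Fin t, p i = 2 → (i : ℕ) = t - 1)
    (c : ℕ) (hcpos : 0 < c) (hcodd : Odd c) (hccop : IsCoprime (c : ℤ) D)
    (hcsq : ∀ q : ℕ, q.Prime → q ∣ c → IsSquare ((D : ZMod q)))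
    (S : Set ℕ)
    (hS : S = {d : ℕ | 0 < d ∧ Squarefree d ∧ (d : ℤ) ∣ D ∧
      ∃ x : K, x ≠ 0 ∧ Algebra.norm ℚ x = ((d * c : ℕ) : ℚ)})
    (φ : ℕ → Fin t → ZMod 2)
    (hφ : φ = fun d i => (padicValNat (p i) d : ZMod 2))
    (C : Fin (t - 1) → ZMod 2)
    (hC : C = fun i => aLeg (c : ℤ) (p (i.castLE (Nat.sub_le t 1)))) :
    -- φ maps S into the solution set of R·X = C
    (∀ d ∈ S, (redeiMatrix D t p).mulVec (φ d) = C) ∧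
    -- φ is injective on S
    (∀ d₁ ∈ S, ∀ d₂ ∈ S, φ d₁ = φ d₂ → d₁ = d₂) ∧
    -- φ is surjective onto the solution set, with inverse X ↦ Π p_i^{x_i}
    (∀ X : Fin t → ZMod 2, (redeiMatrix D t p).mulVec X = C →
      (∏ i, p i ^ (X i).val) ∈ S ∧ φ (∏ i, p i ^ (X i).val) = X) ∧
    -- the inverse formula recovers d
    (∀ d ∈ S, ∏ i, p i ^ (φ d i).val = d) := by
  subst hD hS hφ hC
  have : Algebra.IsQuadraticExtension ℚ K := ⟨hdeg⟩
  obtain ⟨hmaps, hmaps', hinv⟩ :=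
    stmt_6_general ⟨hp, hinj, hdvd, hall, hord⟩ hcodd hccop hcsq
  exact ⟨hmaps, fun _ h₁ _ h₂ => hinv.1.injOn h₁ h₂, fun X hX => ⟨hmaps' hX, hinv.2 hX⟩, hinv.1⟩
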